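/- arXiv:2508.12098 — 7 statements merged into one kernel-verified Lean document; each statement's English description precedes it below -/
import Mathlib

section
/- For all (s,v,w) with s ∈ I one has ∂N/∂v = α₂'(s) tan(α₁(s)) · ∂x/∂v, ∂N/∂w = −α₂'(s) cot(α₁(s)) · ∂x/∂w, and ∂N/∂s − α₁'(s)α₂'(s) · x̂ = −(α₁'(s)α₂''(s) − α₂'(s)α₁''(s)) · ∂x/∂s. (Equivalently, the shape operator of the hypersurface x of S³ × ℝ is diagonal with principal curvatures k₁ = α₁'α₂'' − α₂'α₁'', k₂ = −α₂' tan α₁, k₃ = α₂' cot α₁.) -/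
/-!
The `v`- and `w`-derivatives are computed directly, using `tan · cos = sin` and `cot · sin = cos`.
For the `s`-derivative, write `a = α₁'`, `b = α₂'`. Since `I` is open, differentiating
`a² + b² = 1` gives `a a' + b b' = 0` on `I`; combined with `a² + b² = 1` this yields
`a (a b' - b a') = b'` and `b (a b' - b a') = -a'`, which is what each coordinate reduces to.
-/

/-- The parametrization of the hypersurface of `S³ × ℝ`. -/
noncomputable def xS (α₁ α₂ : ℝ → ℝ) (s v w : ℝ) : Fin 5 → ℝ :=
  ![Real.cos (α₁ s) * Real.cos v, Real.cos (α₁ s) * Real.sin v,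
    Real.sin (α₁ s) * Real.cos w, Real.sin (α₁ s) * Real.sin w, α₂ s]

/-- The unit normal vector field `N`. -/
noncomputable def NS (α₁ α₂ : ℝ → ℝ) (s v w : ℝ) : Fin 5 → ℝ :=
  ![deriv α₂ s * Real.sin (α₁ s) * Real.cos v, deriv α₂ s * Real.sin (α₁ s) * Real.sin v,
    -(deriv α₂ s) * Real.cos (α₁ s) * Real.cos w, -(deriv α₂ s) * Real.cos (α₁ s) * Real.sin w,
    deriv α₁ s]

/-- The projection `x̂` of `x` to the first four coordinates. -/
noncomputable def xhatS (α₁ : ℝ → ℝ) (s v w : ℝ) : Fin 5 → ℝ :=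
  ![Real.cos (α₁ s) * Real.cos v, Real.cos (α₁ s) * Real.sin v,
    Real.sin (α₁ s) * Real.cos w, Real.sin (α₁ s) * Real.sin w, 0]

/-- Differentiating the unit-speed condition on an open set: `α₁' α₁'' + α₂' α₂'' = 0`. -/
theorem unit_speed_deriv {I : Set ℝ} (hI : IsOpen I) {a b : ℝ → ℝ} {s a' b' : ℝ} (hs : s ∈ I)
    (hunit : ∀ s ∈ I, a s ^ 2 + b s ^ 2 = 1) (ha : HasDerivAt a a' s) (hb : HasDerivAt b b' s) :
    a s * a' + b s * b' = 0 := by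
  have h := (ha.pow 2).add (hb.pow 2)
  have hc : HasDerivAt (a ^ 2 + b ^ 2) 0 s :=
    (hasDerivAt_const s (1 : ℝ)).congr_of_eventuallyEq
      (Filter.eventually_of_mem (hI.mem_nhds hs) hunit)
  have := h.unique hc
  norm_num at this
  linarith

theorem sub_eq_mul_of_hasDerivAt {f g : ℝ → ℝ} {s f' g' c k : ℝ} (hf : HasDerivAt f f' s)
    (hg : HasDerivAt g g' s) (h : f' - c = k * g') : deriv f s - c = k * deriv g s := by
  rw [hf.deriv, hg.deriv, h]

/-- `∂N/∂v = α₂'(s) tan(α₁(s)) ∂x/∂v`, `∂N/∂w = −α₂'(s) cot(α₁(s)) ∂x/∂w`,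
and `∂N/∂s − α₁'(s)α₂'(s) x̂ = −(α₁'(s)α₂''(s) − α₂'(s)α₁''(s)) ∂x/∂s`; so the shape
operator is diagonal with principal curvatures `k₁ = α₁'α₂'' − α₂'α₁''`,
`k₂ = −α₂' tan α₁`, `k₃ = α₂' cot α₁`. -/
theorem stmt1 (I : Set ℝ) (hIopen : IsOpen I) (hIne : I.Nonempty) (hIconn : I.OrdConnected)
    (α₁ α₂ : ℝ → ℝ) (hα₁ : ContDiff ℝ (⊤ : ℕ∞) α₁) (hα₂ : ContDiff ℝ (⊤ : ℕ∞) α₂)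
    (hunit : ∀ s ∈ I, (deriv α₁ s) ^ 2 + (deriv α₂ s) ^ 2 = 1)
    (hcos : ∀ s ∈ I, 0 < Real.cos (α₁ s))
    (hsin : ∀ s ∈ I, 0 < Real.sin (α₁ s)) :
    ∀ s ∈ I, ∀ v w : ℝ, ∀ i : Fin 5,
      deriv (fun t => NS α₁ α₂ s t w i) v
        = deriv α₂ s * Real.tan (α₁ s) * deriv (fun t => xS α₁ α₂ s t w i) v ∧
      deriv (fun t => NS α₁ α₂ s v t i) w
        = -(deriv α₂ s) * Real.cot (α₁ s) * deriv (fun t => xS α₁ α₂ s v t i) w ∧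
      deriv (fun t => NS α₁ α₂ t v w i) s - deriv α₁ s * deriv α₂ s * xhatS α₁ s v w i
        = -(deriv α₁ s * deriv (deriv α₂) s - deriv α₂ s * deriv (deriv α₁) s)
            * deriv (fun t => xS α₁ α₂ t v w i) s := by
  intro s hs v w i
  have hc := (hcos s hs).ne'
  have hS := (hsin s hs).ne'
  have hd₁ : HasDerivAt α₁ (deriv α₁ s) s := (hα₁.differentiable (by simp) s).hasDerivAt
  have hd₂ : HasDerivAt α₂ (deriv α₂ s) s := (hα₂.differentiable (by simp) s).hasDerivAt
  have hdd₁ : HasDerivAt (deriv α₁) (deriv (deriv α₁) s) s :=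
    ((contDiff_infty_iff_deriv.1 hα₁).2.differentiable (by simp) s).hasDerivAt
  have hdd₂ : HasDerivAt (deriv α₂) (deriv (deriv α₂) s) s :=
    ((contDiff_infty_iff_deriv.1 hα₂).2.differentiable (by simp) s).hasDerivAt
  have h0 := unit_speed_deriv hIopen hs hunit hdd₁ hdd₂
  have h1 := hunit s hs
  -- The two components of the derivative of the unit vector `(α₁', α₂')`.
  have hA : deriv α₁ s * (deriv α₁ s * deriv (deriv α₂) s - deriv α₂ s * deriv (deriv α₁) s)
      = deriv (deriv α₂) s := by
    linear_combination deriv (deriv α₂) s * h1 - deriv α₂ s * h0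
  have hB : deriv α₂ s * (deriv α₁ s * deriv (deriv α₂) s - deriv α₂ s * deriv (deriv α₁) s)
      = -deriv (deriv α₁) s := by
    linear_combination deriv α₁ s * h0 - deriv (deriv α₁) s * h1
  refine ⟨?_, ?_, ?_⟩
  · rw [Real.tan_eq_sin_div_cos]
    fin_cases i <;> simp [NS, xS] <;> field_simp
  · rw [Real.cot_eq_cos_div_sin]
    fin_cases i <;> simp [NS, xS] <;> field_simp
  · fin_cases i
    · have hN := (hdd₂.mul hd₁.sin).mul_const (Real.cos v)
      have hx := hd₁.cos.mul_const (Real.cos v)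
      refine sub_eq_mul_of_hasDerivAt hN hx ?_
      simp only [xhatS, Fin.zero_eta, Matrix.cons_val_zero]
      linear_combination -Real.sin (α₁ s) * Real.cos v * hA
    · have hN := (hdd₂.mul hd₁.sin).mul_const (Real.sin v)
      have hx := hd₁.cos.mul_const (Real.sin v)
      refine sub_eq_mul_of_hasDerivAt hN hx ?_
      simp [xhatS]
      linear_combination -Real.sin (α₁ s) * Real.sin v * hA
    · have hN := (hdd₂.neg.mul hd₁.cos).mul_const (Real.cos w)
      have hx := hd₁.sin.mul_const (Real.cos w)
      refine sub_eq_mul_of_hasDerivAt hN hx ?_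
      simp [xhatS]
      linear_combination Real.cos (α₁ s) * Real.cos w * hA
    · have hN := (hdd₂.neg.mul hd₁.cos).mul_const (Real.sin w)
      have hx := hd₁.sin.mul_const (Real.sin w)
      refine sub_eq_mul_of_hasDerivAt hN hx ?_
      simp [xhatS]
      linear_combination Real.cos (α₁ s) * Real.sin w * hA
    · refine sub_eq_mul_of_hasDerivAt hdd₁ hd₂ ?_
      simp [xhatS]
      linear_combination hB
end

section
/- For all (s,v,w) with s ∈ I one has (0,0,0,0,1) − α₁'(s) · N(s,v,w) = α₂'(s) · ∂x/∂s(s,v,w); that is, the tangential component T of the vector field ∂/∂x₅ along the hypersurface x equals α₂'(s) e₁ where e₁ = ∂x/∂s, so T is a principal direction of the hypersurface. -/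
/-- `(0,0,0,0,1) − α₁'(s) N(s,v,w) = α₂'(s) ∂x/∂s(s,v,w)`, i.e. the
tangential component `T` of `∂/∂x₅` along `x` equals `α₂'(s) e₁`, so `T` is a principal
direction of the hypersurface. -/
theorem stmt2 (I : Set ℝ) (hIopen : IsOpen I) (hIne : I.Nonempty) (hIconn : I.OrdConnected)
    (α₁ α₂ : ℝ → ℝ) (hα₁ : ContDiff ℝ (⊤ : ℕ∞) α₁) (hα₂ : ContDiff ℝ (⊤ : ℕ∞) α₂)
    (hunit : ∀ s ∈ I, (deriv α₁ s) ^ 2 + (deriv α₂ s) ^ 2 = 1)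
    (hcos : ∀ s ∈ I, 0 < Real.cos (α₁ s))
    (hsin : ∀ s ∈ I, 0 < Real.sin (α₁ s)) :
    ∀ s ∈ I, ∀ v w : ℝ, ∀ i : Fin 5,
      (![0, 0, 0, 0, 1] : Fin 5 → ℝ) i - deriv α₁ s * NS α₁ α₂ s v w i
        = deriv α₂ s * deriv (fun t => xS α₁ α₂ t v w i) s := by
  intro s hs v w i
  have h₁ : HasDerivAt α₁ (deriv α₁ s) s := (hα₁.differentiable (by simp) s).hasDerivAt
  have hc := h₁.cos
  have hn := h₁.sin
  fin_cases i
  · have h : deriv (fun t => xS α₁ α₂ t v w 0) s = _ := (hc.mul_const (Real.cos v)).deriv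
    simp [h, NS]
    ring
  · have h : deriv (fun t => xS α₁ α₂ t v w 1) s = _ := (hc.mul_const (Real.sin v)).deriv
    simp [h, NS]
    ring
  · have h : deriv (fun t => xS α₁ α₂ t v w 2) s = _ := (hn.mul_const (Real.cos w)).deriv
    simp [h, NS]
    ring
  · have h : deriv (fun t => xS α₁ α₂ t v w 3) s = _ := (hn.mul_const (Real.sin w)).deriv
    simp [h, NS]
    ring
  -- The last coordinate is where the unit-speed condition enters.
  · change 1 - deriv α₁ s * deriv α₁ s = deriv α₂ s * deriv α₂ s
    linear_combination -hunit s hs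
end

section
/- For all (s,v,w) with s ∈ I one has ∂N/∂v = −α₂'(s) tanh(α₁(s)) · ∂x/∂v, ∂N/∂w = −α₂'(s) coth(α₁(s)) · ∂x/∂w, and ∂N/∂s + α₁'(s)α₂'(s) · x̂ = −(α₁'(s)α₂''(s) − α₂'(s)α₁''(s)) · ∂x/∂s. (Equivalently, the shape operator of the hypersurface x of H³ × ℝ is diagonal with principal curvatures k₁ = α₁'α₂'' − α₂'α₁'', k₂ = α₂' tanh α₁, k₃ = α₂' coth α₁.) -/
/-!
Each coordinate of `x` and `N` is a product of a function of `s` and a function of `v` or `w`, so the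
three identities reduce to the product and chain rules. In the `v` and `w` directions the factors
`tanh α₁` and `coth α₁` only exchange `cosh α₁` and `sinh α₁`, both nonzero. In the `s` direction,
differentiating the unit speed relation `α₁'² + α₂'² = 1` on the open set `I` gives
`α₁' α₁'' + α₂' α₂'' = 0`; with `κ = α₁' α₂'' - α₂' α₁''` these two relations are the Frenet
equations `α₁'' = -κ α₂'`, `α₂'' = κ α₁'`, which turn `∂N/∂s + α₁' α₂' x̂` into `-κ ∂x/∂s`.
-/

/-- The hyperbolic cotangent `coth x = cosh x / sinh x`. -/
noncomputable def Real.coth (x : ℝ) : ℝ := Real.cosh x / Real.sinh x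

/-- The parametrization of the hypersurface of `H³ × ℝ`. -/
noncomputable def xH (α₁ α₂ : ℝ → ℝ) (s v w : ℝ) : Fin 5 → ℝ :=
  ![Real.cosh (α₁ s) * Real.cosh v, Real.cosh (α₁ s) * Real.sinh v,
    Real.sinh (α₁ s) * Real.cos w, Real.sinh (α₁ s) * Real.sin w, α₂ s]

/-- The unit normal vector field `N`. -/
noncomputable def NH (α₁ α₂ : ℝ → ℝ) (s v w : ℝ) : Fin 5 → ℝ :=
  ![-(deriv α₂ s) * Real.sinh (α₁ s) * Real.cosh v, -(deriv α₂ s) * Real.sinh (α₁ s) * Real.sinh v,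
    -(deriv α₂ s) * Real.cosh (α₁ s) * Real.cos w, -(deriv α₂ s) * Real.cosh (α₁ s) * Real.sin w,
    deriv α₁ s]

/-- The projection `x̂` of `x` to the first four coordinates. -/
noncomputable def xhatH (α₁ : ℝ → ℝ) (s v w : ℝ) : Fin 5 → ℝ :=
  ![Real.cosh (α₁ s) * Real.cosh v, Real.cosh (α₁ s) * Real.sinh v,
    Real.sinh (α₁ s) * Real.cos w, Real.sinh (α₁ s) * Real.sin w, 0]

/-- Unit speed on an open set makes the acceleration orthogonal to the velocity. -/
lemma velocity_mul_acceleration_eq_zero {I : Set ℝ} (hI : IsOpen I) {a b : ℝ → ℝ} {a' b' s : ℝ}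
    (hs : s ∈ I) (hunit : ∀ t ∈ I, a t ^ 2 + b t ^ 2 = 1)
    (ha : HasDerivAt a a' s) (hb : HasDerivAt b b' s) : a s * a' + b s * b' = 0 := by
  have h1 : HasDerivAt (fun t => a t ^ 2 + b t ^ 2) 0 s := by
    refine (hasDerivAt_const s (1 : ℝ)).congr_of_eventuallyEq ?_
    filter_upwards [hI.mem_nhds hs] with t ht using hunit t ht
  have h2 := ((ha.pow 2).add (hb.pow 2)).unique h1
  norm_num at h2
  linarith

/-- `∂N/∂v = −α₂'(s) tanh(α₁(s)) ∂x/∂v`, `∂N/∂w = −α₂'(s) coth(α₁(s)) ∂x/∂w`,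
and `∂N/∂s + α₁'(s)α₂'(s) x̂ = −(α₁'(s)α₂''(s) − α₂'(s)α₁''(s)) ∂x/∂s`; so the shape
operator is diagonal with principal curvatures `k₁ = α₁'α₂'' − α₂'α₁''`,
`k₂ = α₂' tanh α₁`, `k₃ = α₂' coth α₁`. -/
theorem stmt5 (I : Set ℝ) (hIopen : IsOpen I) (hIne : I.Nonempty) (hIconn : I.OrdConnected)
    (α₁ α₂ : ℝ → ℝ) (hα₁ : ContDiff ℝ (⊤ : ℕ∞) α₁) (hα₂ : ContDiff ℝ (⊤ : ℕ∞) α₂)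
    (hunit : ∀ s ∈ I, (deriv α₁ s) ^ 2 + (deriv α₂ s) ^ 2 = 1)
    (hsinh : ∀ s ∈ I, 0 < Real.sinh (α₁ s)) :
    ∀ s ∈ I, ∀ v w : ℝ, ∀ i : Fin 5,
      deriv (fun t => NH α₁ α₂ s t w i) v
        = -(deriv α₂ s) * Real.tanh (α₁ s) * deriv (fun t => xH α₁ α₂ s t w i) v ∧
      deriv (fun t => NH α₁ α₂ s v t i) w
        = -(deriv α₂ s) * Real.coth (α₁ s) * deriv (fun t => xH α₁ α₂ s v t i) w ∧
      deriv (fun t => NH α₁ α₂ t v w i) s + deriv α₁ s * deriv α₂ s * xhatH α₁ s v w i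
        = -(deriv α₁ s * deriv (deriv α₂) s - deriv α₂ s * deriv (deriv α₁) s)
            * deriv (fun t => xH α₁ α₂ t v w i) s := by
  intro s hs v w i
  have hS : Real.sinh (α₁ s) ≠ 0 := (hsinh s hs).ne'
  have hC : Real.cosh (α₁ s) ≠ 0 := (Real.cosh_pos _).ne'
  have d1 : HasDerivAt α₁ (deriv α₁ s) s :=
    (hα₁.differentiable (by simp)).differentiableAt.hasDerivAt
  have d2 : HasDerivAt α₂ (deriv α₂ s) s :=
    (hα₂.differentiable (by simp)).differentiableAt.hasDerivAt
  have e1 : HasDerivAt (deriv α₁) (deriv (deriv α₁) s) s :=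
    ((contDiff_infty_iff_deriv.1 hα₁).2.differentiable (by simp)).differentiableAt.hasDerivAt
  have e2 : HasDerivAt (deriv α₂) (deriv (deriv α₂) s) s :=
    ((contDiff_infty_iff_deriv.1 hα₂).2.differentiable (by simp)).differentiableAt.hasDerivAt
  have hu := hunit s hs
  have ho := velocity_mul_acceleration_eq_zero hIopen hs hunit e1 e2
  have frenet₁ : deriv (deriv α₁) s
      = -(deriv α₁ s * deriv (deriv α₂) s - deriv α₂ s * deriv (deriv α₁) s) * deriv α₂ s := by
    linear_combination (-deriv (deriv α₁) s) * hu + deriv α₁ s * ho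
  have frenet₂ : deriv (deriv α₂) s
      = (deriv α₁ s * deriv (deriv α₂) s - deriv α₂ s * deriv (deriv α₁) s) * deriv α₁ s := by
    linear_combination (-deriv (deriv α₂) s) * hu + deriv α₂ s * ho
  have dS := d1.sinh
  have dC := d1.cosh
  -- The first four coordinates of `N` are `-α₂' sinh α₁` or `-α₂' cosh α₁` times a constant `c`.
  have nS (c : ℝ) := ((e2.neg.mul dS).mul_const c).deriv
  have nC (c : ℝ) := ((e2.neg.mul dC).mul_const c).deriv
  have xS (c : ℝ) := (dS.mul_const c).deriv
  have xC (c : ℝ) := (dC.mul_const c).deriv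
  simp only [Pi.mul_apply, Pi.neg_apply] at nS nC
  refine ⟨?_, ?_, ?_⟩
  · fin_cases i <;> simp [NH, xH, Real.tanh_eq_sinh_div_cosh] <;> field_simp
  · fin_cases i <;> simp [NH, xH, Real.coth] <;> field_simp
  · fin_cases i
    · change deriv (fun t => -deriv α₂ t * Real.sinh (α₁ t) * Real.cosh v) s
        + deriv α₁ s * deriv α₂ s * (Real.cosh (α₁ s) * Real.cosh v)
        = _ * deriv (fun t => Real.cosh (α₁ t) * Real.cosh v) s
      erw [nS, xC]
      linear_combination (-Real.sinh (α₁ s) * Real.cosh v) * frenet₂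
    · change deriv (fun t => -deriv α₂ t * Real.sinh (α₁ t) * Real.sinh v) s
        + deriv α₁ s * deriv α₂ s * (Real.cosh (α₁ s) * Real.sinh v)
        = _ * deriv (fun t => Real.cosh (α₁ t) * Real.sinh v) s
      erw [nS, xC]
      linear_combination (-Real.sinh (α₁ s) * Real.sinh v) * frenet₂
    · change deriv (fun t => -deriv α₂ t * Real.cosh (α₁ t) * Real.cos w) s
        + deriv α₁ s * deriv α₂ s * (Real.sinh (α₁ s) * Real.cos w)
        = _ * deriv (fun t => Real.sinh (α₁ t) * Real.cos w) s
      erw [nC, xS]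
      linear_combination (-Real.cosh (α₁ s) * Real.cos w) * frenet₂
    · change deriv (fun t => -deriv α₂ t * Real.cosh (α₁ t) * Real.sin w) s
        + deriv α₁ s * deriv α₂ s * (Real.sinh (α₁ s) * Real.sin w)
        = _ * deriv (fun t => Real.sinh (α₁ t) * Real.sin w) s
      erw [nC, xS]
      linear_combination (-Real.cosh (α₁ s) * Real.sin w) * frenet₂
    · change deriv (deriv α₁) s + deriv α₁ s * deriv α₂ s * 0 = _ * deriv α₂ s
      linear_combination frenet₁
end

section
/- For all (s,v,w) with s ∈ I one has (0,0,0,0,1) − α₁'(s) · N(s,v,w) = α₂'(s) · ∂x/∂s(s,v,w); that is, the tangential component T of the vector field ∂/∂x₅ along the hypersurface x equals α₂'(s) e₁ where e₁ = ∂x/∂s, so T is a principal direction of the hypersurface. -/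
/-- `(0,0,0,0,1) − α₁'(s) N(s,v,w) = α₂'(s) ∂x/∂s(s,v,w)`, i.e. the
tangential component `T` of `∂/∂x₅` along `x` equals `α₂'(s) e₁`, so `T` is a principal
direction of the hypersurface. -/
theorem stmt6 (I : Set ℝ) (hIopen : IsOpen I) (hIne : I.Nonempty) (hIconn : I.OrdConnected)
    (α₁ α₂ : ℝ → ℝ) (hα₁ : ContDiff ℝ (⊤ : ℕ∞) α₁) (hα₂ : ContDiff ℝ (⊤ : ℕ∞) α₂)
    (hunit : ∀ s ∈ I, (deriv α₁ s) ^ 2 + (deriv α₂ s) ^ 2 = 1)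
    (hsinh : ∀ s ∈ I, 0 < Real.sinh (α₁ s)) :
    ∀ s ∈ I, ∀ v w : ℝ, ∀ i : Fin 5,
      (![0, 0, 0, 0, 1] : Fin 5 → ℝ) i - deriv α₁ s * NH α₁ α₂ s v w i
        = deriv α₂ s * deriv (fun t => xH α₁ α₂ t v w i) s := by
  intro s hs v w i
  have h1 : HasDerivAt α₁ (deriv α₁ s) s :=
    (hα₁.differentiable (by simp)).differentiableAt.hasDerivAt
  have hc := h1.cosh
  have hsh := h1.sinh
  fin_cases i
  · simp [xH, NH, (hc.mul_const (Real.cosh v)).deriv]; ring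
  · simp [xH, NH, (hc.mul_const (Real.sinh v)).deriv]; ring
  · simp [xH, NH, (hsh.mul_const (Real.cos w)).deriv]; ring
  · simp [xH, NH, (hsh.mul_const (Real.sin w)).deriv]; ring
  · simp [xH, NH]
    -- The unit-speed condition is used only in this last coordinate.
    linarith [hunit s hs]
end

section
/- If equations (E2) and (E3) hold on I, then α₁''(s) = α₁'(s)α₂'(s) and λ(s) = −2α₂'(s)² for all s ∈ I. -/
/-- if (E2) and (E3) hold on `I`, then `α₁'' = α₁'α₂'` and
`λ = −2(α₂')²` on `I`. -/
theorem stmt8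
    (I : Set ℝ) (hIopen : IsOpen I) (hIne : I.Nonempty) (hIconn : I.OrdConnected)
    (α₁ α₂ lam : ℝ → ℝ)
    (hα₁ : ContDiff ℝ (⊤ : ℕ∞) α₁) (hα₂ : ContDiff ℝ (⊤ : ℕ∞) α₂) (hlam : ContDiff ℝ (⊤ : ℕ∞) lam)
    (hunit : ∀ s ∈ I, (deriv α₁ s) ^ 2 + (deriv α₂ s) ^ 2 = 1)
    (hsc : ∀ s ∈ I, Real.sin (α₁ s) * Real.cos (α₁ s) ≠ 0)
    (hE2 : ∀ s ∈ I, (deriv (deriv α₁) s - deriv α₁ s * deriv α₂ s) * Real.tan (α₁ s)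
        - 2 * (deriv α₂ s) ^ 2 = lam s)
    (hE3 : ∀ s ∈ I, (deriv α₁ s * deriv α₂ s - deriv (deriv α₁) s) * Real.cot (α₁ s)
        - 2 * (deriv α₂ s) ^ 2 = lam s) :
    ∀ s ∈ I, deriv (deriv α₁) s = deriv α₁ s * deriv α₂ s ∧
      lam s = -2 * (deriv α₂ s) ^ 2 := by
  intro s hs
  have hsin : Real.sin (α₁ s) ≠ 0 := left_ne_zero_of_mul (hsc s hs)
  have hcos : Real.cos (α₁ s) ≠ 0 := right_ne_zero_of_mul (hsc s hs)
  have h2 := hE2 s hs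
  have h3 := hE3 s hs
  -- Subtracting the two equations gives `(α₁'' - α₁'α₂') (tan α₁ + cot α₁) = 0`, and
  -- `tan α₁ + cot α₁ = 1 / (sin α₁ cos α₁)` does not vanish.
  have htc : Real.tan (α₁ s) + Real.cot (α₁ s) ≠ 0 := by
    have h : Real.tan (α₁ s) + Real.cot (α₁ s) = 1 / (Real.sin (α₁ s) * Real.cos (α₁ s)) := by
      rw [Real.tan_eq_sin_div_cos, Real.cot_eq_cos_div_sin]
      field_simp
      exact Real.sin_sq_add_cos_sq _
    rw [h]
    exact one_div_ne_zero (hsc s hs)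
  have hD : deriv (deriv α₁) s - deriv α₁ s * deriv α₂ s = 0 := by
    refine (mul_eq_zero.mp ?_).resolve_right htc
    linear_combination h2 - h3
  refine ⟨sub_eq_zero.mp hD, ?_⟩
  rw [hD] at h2
  linarith
end

section
/- If equations (H2) and (H3) hold on I, then α₁''(s) = α₁'(s)α₂'(s) and λ(s) = 2α₂'(s)² for all s ∈ I. -/
/-- if (H2) and (H3) hold on `I`, then `α₁'' = α₁'α₂'` and
`λ = 2(α₂')²` on `I`. -/
theorem stmt14
    (I : Set ℝ) (hIopen : IsOpen I) (hIne : I.Nonempty) (hIconn : I.OrdConnected)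
    (α₁ α₂ lam : ℝ → ℝ)
    (hα₁ : ContDiff ℝ (⊤ : ℕ∞) α₁) (hα₂ : ContDiff ℝ (⊤ : ℕ∞) α₂) (hlam : ContDiff ℝ (⊤ : ℕ∞) lam)
    (hunit : ∀ s ∈ I, (deriv α₁ s) ^ 2 + (deriv α₂ s) ^ 2 = 1)
    (hsinh : ∀ s ∈ I, 0 < Real.sinh (α₁ s))
    (hH2 : ∀ s ∈ I, (deriv α₁ s * deriv α₂ s - deriv (deriv α₁) s) * Real.tanh (α₁ s)
        + 2 * (deriv α₂ s) ^ 2 = lam s)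
    (hH3 : ∀ s ∈ I, (deriv α₁ s * deriv α₂ s - deriv (deriv α₁) s) * Real.coth (α₁ s)
        + 2 * (deriv α₂ s) ^ 2 = lam s) :
    ∀ s ∈ I, deriv (deriv α₁) s = deriv α₁ s * deriv α₂ s ∧
      lam s = 2 * (deriv α₂ s) ^ 2 := by
  intro s hs
  have hS := hsinh s hs
  have h2 := hH2 s hs
  have h3 := hH3 s hs
  have hC := Real.cosh_pos (α₁ s)
  have hsq := Real.cosh_sq (α₁ s)
  -- `coth x - tanh x = (cosh² x - sinh² x) / (sinh x cosh x) = 1 / (sinh x cosh x)`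
  have hdiff : Real.coth (α₁ s) - Real.tanh (α₁ s)
      = 1 / (Real.sinh (α₁ s) * Real.cosh (α₁ s)) := by
    rw [Real.coth, Real.tanh_eq_sinh_div_cosh]
    field_simp
    linarith
  have hne : Real.coth (α₁ s) - Real.tanh (α₁ s) ≠ 0 := by
    rw [hdiff]
    positivity
  -- subtracting (H2) from (H3) leaves `(α₁'α₂' - α₁'') (coth α₁ - tanh α₁) = 0`
  have hA : deriv α₁ s * deriv α₂ s - deriv (deriv α₁) s = 0 :=
    (mul_eq_zero.mp (by linear_combination h3 - h2)).resolve_right hne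
  refine ⟨by linarith, ?_⟩
  rw [← h2, hA]
  ring
end

section
/- There is no constant λ₀ ∈ ℝ such that equations (H1), (H2) and (H3) hold on I with λ ≡ λ₀; that is, the hypersurface of H³ × ℝ of the given form does not admit a Ricci soliton with potential vector field T. -/
/-- This is `tanh y ≠ coth y`: cross-multiplied, the two would give `sinh² y = cosh² y`. -/
theorem eq_zero_of_mul_tanh_eq_mul_coth {p y : ℝ} (hy : 0 < Real.sinh y)
    (h : p * Real.tanh y = p * Real.coth y) : p = 0 := by
  rw [Real.tanh_eq_sinh_div_cosh, Real.coth] at h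
  have hc := Real.cosh_pos y
  field_simp at h
  have hcs := Real.cosh_sq y
  rw [hcs] at h
  linarith

/-- If the square of `f` is locally constant at `s`, then `f f' = 0` at `s`. -/
theorem mul_deriv_eq_zero_of_sq_eventuallyEq {f : ℝ → ℝ} {s c : ℝ}
    (hf : DifferentiableAt ℝ f s) (h : (fun t => f t ^ 2) =ᶠ[nhds s] fun _ => c) :
    f s * deriv f s = 0 := by
  have h1 := h.deriv_eq
  rw [deriv_const, (hf.hasDerivAt.fun_pow 2).deriv] at h1
  norm_num at h1
  rcases h1 with h1 | h1 <;> simp [h1]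


/-- there is no constant `λ₀` such that (H1), (H2), (H3) hold on `I`
with `λ ≡ λ₀`; i.e. the hypersurface of `H³ × ℝ` of the given form does not admit a
Ricci soliton with potential vector field `T`. -/
theorem stmt17
    (I : Set ℝ) (hIopen : IsOpen I) (hIne : I.Nonempty) (hIconn : I.OrdConnected)
    (α₁ α₂ : ℝ → ℝ)
    (hα₁ : ContDiff ℝ (⊤ : ℕ∞) α₁) (hα₂ : ContDiff ℝ (⊤ : ℕ∞) α₂)
    (hunit : ∀ s ∈ I, (deriv α₁ s) ^ 2 + (deriv α₂ s) ^ 2 = 1)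
    (hsinh : ∀ s ∈ I, 0 < Real.sinh (α₁ s)) :
    ¬ ∃ lam₀ : ℝ,
      (∀ s ∈ I, deriv (deriv α₂) s
        - deriv (deriv α₁) s * (Real.tanh (α₁ s) + Real.coth (α₁ s))
        - 2 * (deriv α₁ s) ^ 2 = lam₀) ∧
      (∀ s ∈ I, (deriv α₁ s * deriv α₂ s - deriv (deriv α₁) s) * Real.tanh (α₁ s)
        + 2 * (deriv α₂ s) ^ 2 = lam₀) ∧
      (∀ s ∈ I, (deriv α₁ s * deriv α₂ s - deriv (deriv α₁) s) * Real.coth (α₁ s)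
        + 2 * (deriv α₂ s) ^ 2 = lam₀) := by
  rintro ⟨c, h1, h2, h3⟩
  obtain ⟨s, hs⟩ := hIne
  have hp : ∀ t ∈ I, deriv α₁ t * deriv α₂ t - deriv (deriv α₁) t = 0 := fun t ht =>
    eq_zero_of_mul_tanh_eq_mul_coth (hsinh t ht) (by linarith [h2 t ht, h3 t ht])
  have hb : ∀ t ∈ I, deriv α₂ t ^ 2 = c / 2 := fun t ht => by
    have := h2 t ht
    rw [hp t ht] at this
    linarith
  have ha : ∀ t ∈ I, deriv α₁ t ^ 2 = 1 - c / 2 := fun t ht => by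
    linarith [hunit t ht, hb t ht]
  have hI : ∀ᶠ t in nhds s, t ∈ I := hIopen.mem_nhds hs
  have hdiff : ∀ f : ℝ → ℝ, ContDiff ℝ (⊤ : ℕ∞) f → DifferentiableAt ℝ (deriv f) s := fun f hf =>
    ((contDiff_infty_iff_deriv.1 hf).2.differentiable (by simp)) s
  have haa := mul_deriv_eq_zero_of_sq_eventuallyEq (hdiff α₁ hα₁) (hI.mono ha)
  have hbb := mul_deriv_eq_zero_of_sq_eventuallyEq (hdiff α₂ hα₂) (hI.mono hb)
  have hps := hp s hs
  have has := ha s hs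
  have hbs := hb s hs
  have h1s := h1 s hs
  have hprod : deriv α₁ s ^ 2 * deriv α₂ s = 0 := by linear_combination haa + deriv α₁ s * hps
  rcases mul_eq_zero.1 hprod with h | h
  · have ha0 : deriv α₁ s = 0 := by simpa using h
    have hb0 : deriv α₂ s ≠ 0 := by
      intro hz
      rw [hz] at hbs
      rw [ha0] at has
      linarith
    have hb' := (mul_eq_zero.1 hbb).resolve_left hb0
    have ha' : deriv (deriv α₁) s = 0 := by rw [ha0] at hps; linarith
    rw [hb', ha', ha0] at h1s
    rw [ha0] at has
    linarith
  · have hc : c = 0 := by rw [h] at hbs; linarith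
    -- `α₂''` at `s` needs `α₂' = 0` near `s`, which the constancy of `(α₂')²` supplies.
    have hz : deriv α₂ =ᶠ[nhds s] fun _ => 0 := hI.mono fun t ht => by
      simpa [hc] using hb t ht
    have hb' : deriv (deriv α₂) s = 0 := by rw [hz.deriv_eq, deriv_const]
    have ha' : deriv (deriv α₁) s = 0 := by rw [h] at hps; linarith
    rw [hb', ha', has, hc] at h1s
    norm_num at h1s
end
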